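/- arXiv:2509.11888 — 2 statements merged into one kernel-verified Lean document; each statement's English description precedes it below -/
import Mathlib

section
/- Let (E, †, ⟨⟨·,·⟩⟩) be a †-bimodule over a ∗-algebra B admitting a finite frame {x_j}, i.e. x = Σ_j ⟨⟨x, x_j⟩⟩ x_j for all x ∈ E. Then the map H : Ē → {left B-linear maps E → B} defined by H(ē)(f) = ⟨⟨f, e⟩⟩ is a positive definite Hermitian metric on E. -/
open MulOpposite

noncomputable section

/-! ## STATEMENT 4: †-bimodules with a finite frame give positive definite
Hermitian metrics -/

/-- Let `(X, †, ⟨⟨·,·⟩⟩)` be a `†`-bimodule over a `∗`-algebra `B`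
(so `X` is finitely generated projective as a left `B`-module, `†` is a `†`-structure and
`⟨⟨·,·⟩⟩` is a left `B`-valued inner product with `⟨⟨xb, y⟩⟩ = ⟨⟨x, yb∗⟩⟩`), admitting a
finite frame `{x_j}`.  Then `H : Ē → {left B-linear maps X → B}`, `H(ē)(f) = ⟨⟨f,e⟩⟩`,
is a positive definite Hermitian metric on `X`. -/
theorem statement4 (B X : Type) [Ring B] [Algebra ℂ B] [StarRing B] [StarModule ℂ B]
    [PartialOrder B] [StarOrderedRing B]
    [AddCommGroup X] [Module ℂ X] [Module B X] [Module Bᵐᵒᵖ X]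
    -- X is finitely generated and projective as a left B-module
    [Module.Finite B X] [Module.Projective B X]
    -- the †-structure on X
    (dag : X → X)
    (dag_add : ∀ x y, dag (x + y) = dag x + dag y)
    (dag_smul : ∀ (c : ℂ) (x : X), dag (c • x) = (starRingEnd ℂ c) • dag x)
    (dag_invol : ∀ x, dag (dag x) = x)
    (dag_left : ∀ (b : B) (x : X), dag (b • x) = op (star b) • dag x)
    (dag_right : ∀ (b : B) (x : X), dag (op b • x) = star b • dag x)
    -- the inner product ⟨⟨·,·⟩⟩ : X × X → B
    (hh : X → X → B)
    (hh_add_left : ∀ x y e, hh (x + y) e = hh x e + hh y e)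
    (hh_add_right : ∀ e x y, hh e (x + y) = hh e x + hh e y)
    (hh_left : ∀ (b : B) (x y : X), hh (b • x) y = b * hh x y)
    (hh_smul_left : ∀ (c : ℂ) (x y : X), hh (c • x) y = c • hh x y)
    (hh_smul_right : ∀ (c : ℂ) (x y : X), hh x (c • y) = (starRingEnd ℂ c) • hh x y)
    (hh_symm : ∀ x y, hh x y = star (hh y x))
    (hh_bal : ∀ (b : B) (x y : X), hh (op b • x) y = hh x (op (star b) • y))
    (hh_pos : ∀ x : X, 0 ≤ hh x x)
    (hh_def : ∀ x : X, hh x x = 0 → x = 0)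
    -- a finite frame {x_j} for X
    (k : ℕ) (xj : Fin k → X)
    (hframe : ∀ v : X, v = ∑ j, (hh v (xj j)) • xj j) :
    -- H(ē)(f) = ⟨⟨f,e⟩⟩ is a positive definite Hermitian metric on X:
    -- each H(ē) is a left B-linear map X → B
    (∀ (b : B) (e f : X), hh (b • f) e = b * hh f e) ∧
    -- H is ℂ-linear from the conjugate module
    (∀ (c : ℂ) (e f : X), hh f (c • e) = (starRingEnd ℂ c) • hh f e) ∧
    -- H is a right B-module map
    (∀ (b : B) (e f : X), hh f (b • e) = hh f e * star b) ∧
    -- H is a left B-module map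
    (∀ (b : B) (e f : X), hh (op b • f) e = hh f (op (star b) • e)) ∧
    -- the symmetry ⟨y, x̄⟩∗ = ⟨x, ȳ⟩
    (∀ e f : X, star (hh e f) = hh f e) ∧
    -- H is injective
    (∀ x y : X, (∀ f, hh f x = hh f y) → x = y) ∧
    -- H is surjective onto the left B-linear maps X → B
    (∀ φ : X →ₗ[B] B, ∃ e : X, ∀ f, φ f = hh f e) ∧
    -- H is positive definite
    (∀ e : X, 0 ≤ hh e e ∧ (hh e e = 0 ↔ e = 0)) := by
  have smul_right : ∀ (b : B) (e f : X), hh f (b • e) = hh f e * star b := fun b e f ↦ by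
    rw [hh_symm, hh_left, star_mul, ← hh_symm]
  refine ⟨fun b e f ↦ hh_left b f e, fun c e f ↦ hh_smul_right c f e, smul_right,
    fun b e f ↦ hh_bal b f e, fun e f ↦ (hh_symm f e).symm, fun x y h ↦ ?_, fun φ ↦ ?_,
    fun e ↦ ⟨hh_pos e, hh_def e, ?_⟩⟩
  · have key : ∀ j, hh x (xj j) = hh y (xj j) := fun j ↦ by
      rw [hh_symm x, h, ← hh_symm]
    rw [hframe x, hframe y]
    simp only [key]
  · refine ⟨∑ j, star (φ (xj j)) • xj j, fun f ↦ ?_⟩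
    have map_sum_right :
        hh f (∑ j, star (φ (xj j)) • xj j) = ∑ j, hh f (star (φ (xj j)) • xj j) :=
      map_sum (AddMonoidHom.mk' (hh f) (hh_add_right f)) _ _
    rw [map_sum_right]
    conv_lhs => rw [hframe f]
    simp only [map_sum, map_smul, smul_eq_mul, smul_right, star_star]
  · rintro rfl
    simpa using hh_left 0 0 0

end
end

section
/- Let π : A → H be a surjective homomorphism of Hopf algebras, B = A^{co(H)} the coinvariant subalgebra, and assume B is a quantum homogeneous space (A is faithfully flat as a right B-module) and H is cosemisimple. If (Ω•, ∧, d) is an A-covariant differential calculus on B such that each Ω^k belongs to the category ^A_0Mod_B (objects of the relative Hopf module category that are finitely generated as left B-modules and satisfy Ω^k B⁺ = B⁺ Ω^k), then (Ω•, ∧, d) is covariantly quasi-tame: there exists a morphism s : Ω² → Ω¹ ⊗_B Ω¹ in the category of relative Hopf modules (A-covariant and B-bilinear) with ∧ ∘ s = id_{Ω²}. -/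
open MulOpposite TensorProduct

noncomputable section

/-! ## Generic noncommutative differential geometry preliminaries

We encode a `B`-bimodule as a `ℂ`-module with a left `B`-action and a right `B`-action
(encoded as a left `Bᵐᵒᵖ`-action).  The balanced tensor product `M ⊗_B N` is encoded by
a type `T` together with a "balanced pairing" `tp` whose image spans `T`. -/

/-- Data realizing `T` as the balanced tensor product `M ⊗_B N` over the
(possibly noncommutative) `ℂ`-algebra `B`: a `ℂ`-bilinear pairing which is left
`B`-linear in the first variable, right `B`-linear in the second variable,
`B`-balanced in the middle, and whose image spans `T`. -/
structure BalPair (B : Type) [Ring B] [Algebra ℂ B]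
    (M N T : Type) [AddCommGroup M] [Module ℂ M] [Module B M] [Module Bᵐᵒᵖ M]
    [AddCommGroup N] [Module ℂ N] [Module B N] [Module Bᵐᵒᵖ N]
    [AddCommGroup T] [Module ℂ T] [Module B T] [Module Bᵐᵒᵖ T] : Type where
  tp : M →ₗ[ℂ] N →ₗ[ℂ] T
  tp_left : ∀ (b : B) (m : M) (n : N), tp (b • m) n = b • tp m n
  tp_right : ∀ (b : B) (m : M) (n : N), tp m (op b • n) = op b • tp m n
  tp_mid : ∀ (b : B) (m : M) (n : N), tp (op b • m) n = tp m (b • n)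
  tp_span : Submodule.span ℂ {t : T | ∃ m n, t = tp m n} = ⊤

/-- A first order differential calculus `(Ω¹, d)` over `B`:  `d : B → Ω¹` is a
derivation whose image generates `Ω¹` as a `B`-bimodule. -/
structure FODC (B : Type) [Ring B] [Algebra ℂ B]
    (Ω : Type) [AddCommGroup Ω] [Module ℂ Ω] [Module B Ω] [Module Bᵐᵒᵖ Ω] : Type where
  d : B →ₗ[ℂ] Ω
  leibniz : ∀ a b : B, d (a * b) = a • d b + op b • d a
  generates : Submodule.span ℂ {x : Ω | ∃ a b : B, x = a • d b} = ⊤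

section Connections

variable {B : Type} [Ring B] [Algebra ℂ B]
variable {Ω E TE T : Type}
  [AddCommGroup Ω] [Module ℂ Ω] [Module B Ω] [Module Bᵐᵒᵖ Ω]
  [AddCommGroup E] [Module ℂ E] [Module B E] [Module Bᵐᵒᵖ E]
  [AddCommGroup TE] [Module ℂ TE] [Module B TE] [Module Bᵐᵒᵖ TE]
  [AddCommGroup T] [Module ℂ T] [Module B T] [Module Bᵐᵒᵖ T]

/-- `∇ : E → Ω¹ ⊗_B E` is a left connection: `∇(be) = b∇e + db ⊗ e`. -/
def IsConnection (P : BalPair B Ω E TE) (d : B →ₗ[ℂ] Ω) (cn : E →ₗ[ℂ] TE) : Prop :=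
  ∀ (b : B) (e : E), cn (b • e) = b • cn e + P.tp (d b) e

/-- A `B`-bimodule map. -/
def IsBimoduleMap {M N : Type} [AddCommGroup M] [Module ℂ M] [Module B M] [Module Bᵐᵒᵖ M]
    [AddCommGroup N] [Module ℂ N] [Module B N] [Module Bᵐᵒᵖ N] (σ : M →ₗ[ℂ] N) : Prop :=
  (∀ (b : B) (t : M), σ (b • t) = b • σ t) ∧ ∀ (b : B) (t : M), σ (op b • t) = op b • σ t

/-- The right Leibniz rule for a bimodule connection `(∇, σ)`:
`∇(eb) = (∇e)b + σ(e ⊗ db)`. -/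
def IsRightConnection (Q : BalPair B E Ω TE)
    (d : B →ₗ[ℂ] Ω) (cn : E →ₗ[ℂ] TE) (σ : TE →ₗ[ℂ] TE) : Prop :=
  ∀ (b : B) (e : E), cn (op b • e) = op b • cn e + σ (Q.tp e (d b))

end Connections

section Star

variable (B : Type) [Ring B] [Algebra ℂ B] [StarRing B]
variable (Ω : Type) [AddCommGroup Ω] [Module ℂ Ω] [Module B Ω] [Module Bᵐᵒᵖ Ω]

/-- A `∗`-structure on the bimodule `Ω` over the `∗`-algebra `B`:
an antilinear involution with `(bωc)∗ = c∗ω∗b∗`. -/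
structure StarData : Type where
  st : Ω → Ω
  st_add : ∀ x y, st (x + y) = st x + st y
  st_smul : ∀ (c : ℂ) (x : Ω), st (c • x) = (starRingEnd ℂ c) • st x
  st_invol : ∀ x, st (st x) = x
  st_left : ∀ (b : B) (x : Ω), st (b • x) = op (star b) • st x
  st_right : ∀ (b : B) (x : Ω), st (op b • x) = star b • st x

end Star

section StarNotions

variable {B : Type} [Ring B] [Algebra ℂ B] [StarRing B]
variable {Ω E TE T : Type}
  [AddCommGroup Ω] [Module ℂ Ω] [Module B Ω] [Module Bᵐᵒᵖ Ω]
  [AddCommGroup E] [Module ℂ E] [Module B E] [Module Bᵐᵒᵖ E]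
  [AddCommGroup TE] [Module ℂ TE] [Module B TE] [Module Bᵐᵒᵖ TE]
  [AddCommGroup T] [Module ℂ T] [Module B T] [Module Bᵐᵒᵖ T]

/-- A metric `g = Σᵢ ωᵢ ⊗ ηᵢ` is real if `g = Σᵢ ηᵢ∗ ⊗ ωᵢ∗`
(stated for every representation of `g` as a sum of simple tensors). -/
def IsRealMetric (P : BalPair B Ω Ω T) (S : StarData B Ω) (g : T) : Prop :=
  ∀ (n : ℕ) (α β : Fin n → Ω), g = ∑ i, P.tp (α i) (β i) →
    g = ∑ i, P.tp (S.st (β i)) (S.st (α i))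

/-- The Beggs–Majid `∗`-preserving condition
`σ̄ ∘ Υ⁻¹ ∘ (⋆ ⊗ ⋆) ∘ ∇ = ∇̄ ∘ ⋆` for a bimodule connection `(∇, σ)` on `Ω¹`,
written out on representations `∇ω = Σᵢ αᵢ ⊗ βᵢ`:  `∇(ω∗) = Σᵢ σ(βᵢ∗ ⊗ αᵢ∗)`. -/
def IsStarPreserving (P : BalPair B Ω Ω T) (S : StarData B Ω)
    (cn : Ω →ₗ[ℂ] T) (σ : T →ₗ[ℂ] T) : Prop :=
  ∀ (ω : Ω) (n : ℕ) (α β : Fin n → Ω), cn ω = ∑ i, P.tp (α i) (β i) →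
    cn (S.st ω) = ∑ i, σ (P.tp (S.st (β i)) (S.st (α i)))

/-- Compatibility of a connection `∇` on `E` with an Hermitian metric (with associated
sesquilinear pairing `h`), in the sense of Beggs–Majid:
`d⟨·,·⟩ = (id ⊗ ⟨·,·⟩)(∇ ⊗ id) + (⟨·,·⟩ ⊗ id)(id ⊗ ∇̃)`, written out on
representations `∇e = Σᵢ αᵢ ⊗ xᵢ`, `∇f = Σⱼ βⱼ ⊗ yⱼ`. -/
def IsHermCompatible (P : BalPair B Ω E TE) (d : B →ₗ[ℂ] Ω) (S : StarData B Ω)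
    (h : E → E → B) (cn : E →ₗ[ℂ] TE) : Prop :=
  ∀ (e f : E) (n m : ℕ) (α : Fin n → Ω) (x : Fin n → E) (β : Fin m → Ω) (y : Fin m → E),
    cn e = ∑ i, P.tp (α i) (x i) → cn f = ∑ j, P.tp (β j) (y j) →
    d (h e f) = (∑ i, op (h (x i) f) • α i) + ∑ j, h e (y j) • S.st (β j)

/-- A connection `∇'` on `E` for the calculus `(Ω¹, d')` with †-structure `dag` is
Hermitian with respect to the sesquilinear form `h` (Mesland–Rennie):
`d'⟨⟨e,f⟩⟩ = ⟨⟨∇'e, f⟩⟩ − ⟨⟨e, ∇'f⟩⟩`, written out on representations. -/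
def IsHermitianConnection (P : BalPair B Ω E TE) (d' : B →ₗ[ℂ] Ω) (dag : Ω → Ω)
    (h : E → E → B) (cn' : E →ₗ[ℂ] TE) : Prop :=
  ∀ (e f : E) (n m : ℕ) (α : Fin n → Ω) (x : Fin n → E) (β : Fin m → Ω) (y : Fin m → E),
    cn' e = ∑ i, P.tp (α i) (x i) → cn' f = ∑ j, P.tp (β j) (y j) →
    d' (h e f) = (∑ i, op (h (x i) f) • α i) - ∑ j, h e (y j) • dag (β j)

end StarNotions

section Junk

variable {B : Type} [Ring B] [Algebra ℂ B]
variable {Ω T : Type}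
  [AddCommGroup Ω] [Module ℂ Ω] [Module B Ω] [Module Bᵐᵒᵖ Ω]
  [AddCommGroup T] [Module ℂ T] [Module B T] [Module Bᵐᵒᵖ T]

/-- The junk 2-tensors `JT²_d = { π̂(δω) : ω ∈ Ω¹_u ∩ Ker π̂ }` of a first order calculus,
realized concretely inside `T = Ω¹ ⊗_B Ω¹`. -/
def junkTwoTensors (P : BalPair B Ω Ω T) (D : FODC B Ω) : Set T :=
  {t | ∃ (n : ℕ) (a b : Fin n → B), (∑ i, a i * b i = 0) ∧ (∑ i, a i • D.d (b i) = 0) ∧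
    t = ∑ i, P.tp (D.d (a i)) (D.d (b i))}

/-- Torsion-freeness in the sense of Mesland–Rennie for a weak second order
differential structure `(Ω¹, d, ψ)`: `(1 − ψ)∇ = d_ψ`, where
`d_ψ(Σᵢ aᵢ dbᵢ) = (1 − ψ)(Σᵢ daᵢ ⊗ dbᵢ)` (well defined since `JT²_d ⊆ Ran ψ`). -/
def IsTorsionFreeMR (P : BalPair B Ω Ω T) (d : B →ₗ[ℂ] Ω) (ψ : T →ₗ[ℂ] T)
    (cn : Ω →ₗ[ℂ] T) : Prop :=
  ∀ (n : ℕ) (a b : Fin n → B),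
    cn (∑ i, a i • d (b i)) - ψ (cn (∑ i, a i • d (b i))) =
      (∑ i, P.tp (d (a i)) (d (b i))) - ψ (∑ i, P.tp (d (a i)) (d (b i)))

end Junk


/-! ### Hopf-algebraic preliminaries -/


/-! ## Hopf-algebraic preliminaries: coactions, relative Hopf modules,
faithful flatness, cosemisimplicity -/

/-- A left coaction of the bialgebra `A` on a `ℂ`-module `M`. -/
structure Coaction (A : Type) [Ring A] [Bialgebra ℂ A]
    (M : Type) [AddCommGroup M] [Module ℂ M] : Type where
  ρ : M →ₗ[ℂ] A ⊗[ℂ] M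
  coassoc : ∀ m : M, (LinearMap.rTensor M (Coalgebra.comul (R := ℂ) (A := A))) (ρ m) =
    (TensorProduct.assoc ℂ A A M).symm ((LinearMap.lTensor A ρ) (ρ m))
  counit : ∀ m : M,
    (TensorProduct.lid ℂ M) ((LinearMap.rTensor M (Coalgebra.counit (R := ℂ) (A := A))) (ρ m)) = m

section Coactions

variable {A : Type} [Ring A] [Bialgebra ℂ A]

/-- An `A`-covariant (`ℂ`-linear) map between `A`-comodules. -/
def IsCovariant {M N : Type} [AddCommGroup M] [Module ℂ M] [AddCommGroup N] [Module ℂ N]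
    (cM : Coaction A M) (cN : Coaction A N) (f : M →ₗ[ℂ] N) : Prop :=
  ∀ m : M, cN.ρ (f m) = LinearMap.lTensor A f (cM.ρ m)

/-- An element `m` is coinvariant if `ρ(m) = 1 ⊗ m`. -/
def IsCoinvariant {M : Type} [AddCommGroup M] [Module ℂ M]
    (cM : Coaction A M) (m : M) : Prop :=
  cM.ρ m = (1 : A) ⊗ₜ m

/-- The coaction of `A` on a comodule algebra `B` is an algebra map. -/
def IsComoduleAlgebra {B : Type} [Ring B] [Algebra ℂ B] (cB : Coaction A B) : Prop :=
  cB.ρ 1 = 1 ∧ ∀ b b' : B, cB.ρ (b * b') = cB.ρ b * cB.ρ b'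

/-- `M` is a relative Hopf module over the comodule algebra `B`:
`δ_M(bmb') = δ_B(b) δ_M(m) δ_B(b')`, written out on representations
`δ_B(b) = Σᵢ aᵢ ⊗ cᵢ` of the coaction of `B`. -/
def IsRelHopfModule {B M : Type} [Ring B] [Algebra ℂ B]
    [AddCommGroup M] [Module ℂ M] [Module B M] [Module Bᵐᵒᵖ M]
    [SMulCommClass B ℂ M] [SMulCommClass Bᵐᵒᵖ ℂ M]
    (cB : Coaction A B) (cM : Coaction A M) : Prop :=
  (∀ (b : B) (m : M) (n : ℕ) (a : Fin n → A) (c : Fin n → B),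
    cB.ρ b = ∑ i, a i ⊗ₜ c i →
    cM.ρ (b • m) = ∑ i, (TensorProduct.map (LinearMap.mulLeft ℂ (a i))
      (DistribMulAction.toLinearMap ℂ M (c i))) (cM.ρ m)) ∧
  (∀ (b : B) (m : M) (n : ℕ) (a : Fin n → A) (c : Fin n → B),
    cB.ρ b = ∑ i, a i ⊗ₜ c i →
    cM.ρ (op b • m) = ∑ i, (TensorProduct.map (LinearMap.mulRight ℂ (a i))
      (DistribMulAction.toLinearMap ℂ M (op (c i)))) (cM.ρ m))

end Coactions

section FaithfulFlat

variable (B : Type) [Ring B] [Algebra ℂ B]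
variable (A : Type) [AddCommGroup A] [Module ℂ A] [Module Bᵐᵒᵖ A]

/-- The relator submodule of `A ⊗[ℂ] M` defining the balanced tensor product `A ⊗_B M`
of the right `B`-module `A` with a left `B`-module `M`. -/
def balRel (M : Type) [AddCommGroup M] [Module ℂ M] [Module B M] :
    Submodule ℂ (A ⊗[ℂ] M) :=
  Submodule.span ℂ {x | ∃ (a : A) (b : B) (m : M), x = (op b • a) ⊗ₜ m - a ⊗ₜ (b • m)}

/-- The balanced tensor product `A ⊗_B M`. -/
def BalTensor (M : Type) [AddCommGroup M] [Module ℂ M] [Module B M] : Type :=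
  (A ⊗[ℂ] M) ⧸ balRel B A M

instance (M : Type) [AddCommGroup M] [Module ℂ M] [Module B M] :
    AddCommGroup (BalTensor B A M) :=
  inferInstanceAs (AddCommGroup ((A ⊗[ℂ] M) ⧸ balRel B A M))

instance (M : Type) [AddCommGroup M] [Module ℂ M] [Module B M] :
    Module ℂ (BalTensor B A M) :=
  inferInstanceAs (Module ℂ ((A ⊗[ℂ] M) ⧸ balRel B A M))

/-- A left `B`-linear map between `ℂ`-compatible `B`-modules is `ℂ`-linear. -/
def toCLinear {M N : Type} [AddCommGroup M] [Module ℂ M] [Module B M] [IsScalarTower ℂ B M]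
    [AddCommGroup N] [Module ℂ N] [Module B N] [IsScalarTower ℂ B N] (f : M →ₗ[B] N) :
    M →ₗ[ℂ] N where
  toFun := f
  map_add' := f.map_add
  map_smul' := fun c m => by
    simp only [RingHom.id_apply]
    rw [← algebraMap_smul B c m, map_smul, algebraMap_smul]

/-- The induced map `id_A ⊗ f : A ⊗_B M → A ⊗_B N` of a left `B`-linear map. -/
def balMap {M N : Type} [AddCommGroup M] [Module ℂ M] [Module B M] [IsScalarTower ℂ B M]
    [AddCommGroup N] [Module ℂ N] [Module B N] [IsScalarTower ℂ B N] (f : M →ₗ[B] N) :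
    BalTensor B A M →ₗ[ℂ] BalTensor B A N :=
  Submodule.mapQ _ _ (LinearMap.lTensor A (toCLinear B f))
    (by
      refine Submodule.span_le.mpr ?_
      rintro x ⟨a, b, m, rfl⟩
      simp only [SetLike.mem_coe, Submodule.mem_comap, map_sub, LinearMap.lTensor_tmul]
      have h1 : (toCLinear B f) (b • m) = b • (toCLinear B f) m := f.map_smul b m
      rw [h1]
      exact Submodule.subset_span ⟨a, b, (toCLinear B f) m, rfl⟩)

/-- `A` is faithfully flat as a right `B`-module: the functor `A ⊗_B −` preserves
injectivity and reflects triviality. -/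
def RightFaithfullyFlat : Prop :=
  (∀ (M N : Type) [AddCommGroup M] [Module ℂ M] [Module B M] [IsScalarTower ℂ B M]
    [AddCommGroup N] [Module ℂ N] [Module B N] [IsScalarTower ℂ B N]
    (f : M →ₗ[B] N), Function.Injective f → Function.Injective (balMap B A f)) ∧
  (∀ (M : Type) [AddCommGroup M] [Module ℂ M] [Module B M] [IsScalarTower ℂ B M],
    Subsingleton (BalTensor B A M) → Subsingleton M)

end FaithfulFlat

/-- A bialgebra is cosemisimple iff it admits a (bi-)invariant integral. -/
def IsCosemisimple (H : Type) [Ring H] [Bialgebra ℂ H] : Prop :=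
  ∃ h : H →ₗ[ℂ] ℂ, h 1 = 1 ∧
    (∀ x : H, (TensorProduct.rid ℂ H)
      (LinearMap.lTensor H h (Coalgebra.comul (R := ℂ) x)) = h x • 1) ∧
    (∀ x : H, (TensorProduct.lid ℂ H)
      (LinearMap.rTensor H h (Coalgebra.comul (R := ℂ) x)) = h x • 1)


section HopfIdentities

open Coalgebra HopfAlgebra WithConv

variable {A : Type} [Ring A] [HopfAlgebra ℂ A]

/-- `Σ S(x₁)₁ x₂ ⊗ S(x₁)₂ = 1 ⊗ S(x)`. -/
lemma comul_antipode_convMul_includeLeft :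
    toConv (comul (R := ℂ) (A := A) ∘ₗ antipode ℂ) *
        toConv (Algebra.TensorProduct.includeLeft : A →ₐ[ℂ] A ⊗[ℂ] A).toLinearMap =
      toConv ((Algebra.TensorProduct.includeRight : A →ₐ[ℂ] A ⊗[ℂ] A).toLinearMap ∘ₗ
        antipode ℂ) := by
  set F := toConv (comul (R := ℂ) (A := A) ∘ₗ antipode ℂ)
  set L := toConv (Algebra.TensorProduct.includeLeft : A →ₐ[ℂ] A ⊗[ℂ] A).toLinearMap
  set R := toConv (Algebra.TensorProduct.includeRight : A →ₐ[ℂ] A ⊗[ℂ] A).toLinearMap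
  set RS := toConv ((Algebra.TensorProduct.includeRight : A →ₐ[ℂ] A ⊗[ℂ] A).toLinearMap ∘ₗ
    antipode ℂ)
  have hLR : L * R = toConv (comul (R := ℂ) (A := A)) := by
    ext x
    rw [(ℛ ℂ x).convMul_apply]
    simp [L, R, (ℛ ℂ x).eq]
  have hR : R * RS = 1 := by
    ext x
    rw [(ℛ ℂ x).convMul_apply]
    simp only [R, RS, LinearMap.comp_apply, AlgHom.toLinearMap_apply, ← map_mul, ← map_sum,
      sum_mul_antipode_eq_algebraMap_counit]
    simp
  have hF : F * toConv (comul (R := ℂ) (A := A)) = 1 := by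
    ext x
    rw [(ℛ ℂ x).convMul_apply]
    simp only [F, LinearMap.comp_apply, ← Bialgebra.comul_mul, ← map_sum,
      sum_antipode_mul_eq_algebraMap_counit]
    simp
  calc F * L = F * L * (R * RS) := by rw [hR, mul_one]
    _ = F * (L * R) * RS := by simp only [mul_assoc]
    _ = RS := by rw [hLR, hF, one_mul]

variable {M : Type} [AddCommGroup M] [Module ℂ M]

/-- `Σ m₋₂ S(m₋₁) ⊗ m₀ = 1 ⊗ m`. -/
lemma Coaction.mul_antipode_rTensor (c : Coaction A M) (m : M) :
    LinearMap.rTensor M (LinearMap.mul' ℂ A ∘ₗ LinearMap.lTensor A (antipode ℂ))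
      ((TensorProduct.assoc ℂ A A M).symm (LinearMap.lTensor A c.ρ (c.ρ m))) = 1 ⊗ₜ m := by
  rw [← c.coassoc, ← LinearMap.comp_apply, ← LinearMap.rTensor_comp, LinearMap.comp_assoc,
    mul_antipode_lTensor_comul]
  have h := c.counit m
  rw [← LinearEquiv.eq_symm_apply, TensorProduct.lid_symm_apply] at h
  rw [LinearMap.rTensor_comp, LinearMap.comp_apply, h]
  simp

end HopfIdentities

section Expectation

open Coalgebra HopfAlgebra

variable {A : Type} [Ring A] [HopfAlgebra ℂ A] {H : Type} [Ring H] [HopfAlgebra ℂ H]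

/-- An invariant integral on `H` induces an `A`-covariant, `B`-bilinear unital
projection of `A` onto the coinvariants `B`. -/
lemma exists_coinvariant_expectation (π : BialgHom ℂ A H)
    {B : Type} [Ring B] [Algebra ℂ B] (ι : B →ₐ[ℂ] A) (hι : Function.Injective ι)
    (hcoinv : ∀ a : A, a ∈ Set.range ι ↔
      (LinearMap.lTensor A π.toLinearMap) (comul (R := ℂ) a) = a ⊗ₜ (1 : H))
    (hcosemi : IsCosemisimple H) (δB : Coaction A B)
    (hδB_comul : ∀ b : B,
      (TensorProduct.map LinearMap.id ι.toLinearMap) (δB.ρ b) = comul (R := ℂ) (ι b)) :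
    ∃ E : A →ₗ[ℂ] B, E 1 = 1 ∧ (∀ b a, E (ι b * a) = b * E a) ∧
      (∀ a b, E (a * ι b) = E a * b) ∧
      ∀ a, δB.ρ (E a) = LinearMap.lTensor A E (comul (R := ℂ) a) := by
  obtain ⟨h, h1, hh, -⟩ := hcosemi
  let θ : A →ₐ[ℂ] A ⊗[ℂ] H :=
    (Algebra.TensorProduct.map (AlgHom.id ℂ A) (π : A →ₐ[ℂ] H)).comp (Bialgebra.comulAlgHom ℂ A)
  have hθ : ∀ a, θ a = LinearMap.lTensor A π.toLinearMap (comul (R := ℂ) a) := fun a => rfl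
  have hθι : ∀ b, θ (ι b) = ι b ⊗ₜ (1 : H) := fun b => by
    rw [hθ]; exact (hcoinv _).1 ⟨b, rfl⟩
  let R : A ⊗[ℂ] H →ₗ[ℂ] A := (TensorProduct.rid ℂ A).toLinearMap ∘ₗ LinearMap.lTensor A h
  have hR : ∀ a x, R (a ⊗ₜ x) = h x • a := fun a x => by simp [R]
  let e : A →ₗ[ℂ] A := R ∘ₗ θ.toLinearMap
  have he : ∀ a, e a = R (θ a) := fun a => rfl
  have he_cov : ∀ a, comul (R := ℂ) (e a) = LinearMap.lTensor A e (comul (R := ℂ) a) := by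
    intro a
    let W : A ⊗[ℂ] (A ⊗[ℂ] A) →ₗ[ℂ] A ⊗[ℂ] A :=
      LinearMap.lTensor A (R ∘ₗ LinearMap.lTensor A π.toLinearMap)
    have h2 : LinearMap.lTensor A e (comul (R := ℂ) a) =
        W (LinearMap.lTensor A comul (comul (R := ℂ) a)) := by
      rw [← LinearMap.comp_apply W, ← LinearMap.lTensor_comp]; rfl
    have h3 : (comul (R := ℂ)) ∘ₗ R ∘ₗ LinearMap.lTensor A π.toLinearMap =
        W ∘ₗ (TensorProduct.assoc ℂ A A A).toLinearMap ∘ₗ LinearMap.rTensor A comul := by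
      refine TensorProduct.ext' fun x y => ?_
      simp only [LinearMap.comp_apply, LinearMap.lTensor_tmul, LinearMap.rTensor_tmul, hR, map_smul]
      generalize comul (R := ℂ) x = z
      induction z with
      | zero => simp
      | add u v hu hv => simp only [map_add, smul_add, TensorProduct.add_tmul, hu, hv]
      | tmul u v => simp [W, hR]
    rw [h2, ← coassoc_apply]
    exact LinearMap.congr_fun h3 (comul a)
  have he_mem : ∀ a, e a ∈ Set.range ι := by
    intro a
    rw [hcoinv]
    let W : A ⊗[ℂ] (A ⊗[ℂ] A) →ₗ[ℂ] A ⊗[ℂ] H :=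
      LinearMap.lTensor A ((TensorProduct.rid ℂ H).toLinearMap ∘ₗ
        TensorProduct.map π.toLinearMap (h ∘ₗ π.toLinearMap))
    have h3 : LinearMap.lTensor A π.toLinearMap ∘ₗ (comul (R := ℂ)) ∘ₗ R ∘ₗ
          LinearMap.lTensor A π.toLinearMap =
        W ∘ₗ (TensorProduct.assoc ℂ A A A).toLinearMap ∘ₗ LinearMap.rTensor A comul := by
      refine TensorProduct.ext' fun x y => ?_
      simp only [LinearMap.comp_apply, LinearMap.lTensor_tmul, LinearMap.rTensor_tmul, hR,
        map_smul]
      generalize comul (R := ℂ) x = z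
      induction z with
      | zero => simp
      | add u v hu hv => simp only [map_add, smul_add, TensorProduct.add_tmul, hu, hv]
      | tmul u v => simp [W]
    have h4 : W ∘ₗ LinearMap.lTensor A comul =
        (TensorProduct.mk ℂ A H).flip 1 ∘ₗ R ∘ₗ LinearMap.lTensor A π.toLinearMap := by
      refine TensorProduct.ext' fun x y => ?_
      have h5 := hh (π y)
      have h6 : comul (R := ℂ) (π y) =
          TensorProduct.map π.toLinearMap π.toLinearMap (comul (R := ℂ) y) :=
        (CoalgHomClass.map_comp_comul_apply π y).symm
      rw [h6, ← LinearMap.comp_apply, LinearMap.lTensor_comp_map] at h5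
      simp only [W, LinearMap.comp_apply, LinearMap.lTensor_tmul, LinearEquiv.coe_coe, h5]
      simp only [LinearMap.flip_apply, TensorProduct.mk_apply, hR, TensorProduct.tmul_smul,
        TensorProduct.smul_tmul']
      rfl
    calc _ = W (TensorProduct.assoc ℂ A A A (LinearMap.rTensor A comul (comul (R := ℂ) a))) :=
          LinearMap.congr_fun h3 (comul a)
      _ = _ := by rw [coassoc_apply]; exact LinearMap.congr_fun h4 (comul a)
  have he_range : ∀ a, e a ∈ LinearMap.range ι.toLinearMap := fun a => he_mem a
  let ψ := LinearEquiv.ofInjective ι.toLinearMap hι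
  let E : A →ₗ[ℂ] B := ψ.symm.toLinearMap ∘ₗ e.codRestrict _ he_range
  have hE : ∀ a, ι (E a) = e a := fun a => by
    have := congrArg Subtype.val (ψ.apply_symm_apply (e.codRestrict _ he_range a))
    exact this
  refine ⟨E, ?_, ?_, ?_, ?_⟩
  · apply hι
    rw [hE, he, map_one ι, map_one θ, Algebra.TensorProduct.one_def, hR, h1, one_smul]
  · intro b a
    apply hι
    rw [map_mul ι, hE, hE, he, he, map_mul θ, hθι]
    generalize θ a = z
    induction z with
    | zero => simp
    | add u v hu hv => simp only [mul_add, map_add, hu, hv]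
    | tmul u v => simp [hR]
  · intro a b
    apply hι
    rw [map_mul ι, hE, hE, he, he, map_mul θ, hθι]
    generalize θ a = z
    induction z with
    | zero => simp
    | add u v hu hv => simp only [add_mul, map_add, hu, hv]
    | tmul u v => simp [hR]
  · intro a
    apply Module.Flat.lTensor_preserves_injective_linearMap (M := A) ι.toLinearMap hι
    change TensorProduct.map LinearMap.id ι.toLinearMap _ = _
    have hιE : ι.toLinearMap ∘ₗ E = e := LinearMap.ext hE
    rw [hδB_comul, hE, he_cov, ← hιE, LinearMap.lTensor_comp, LinearMap.comp_apply]

end Expectation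

section RelativeHopfModules

open Coalgebra HopfAlgebra

variable {A : Type} [Ring A] [HopfAlgebra ℂ A] {B : Type} [Ring B] [Algebra ℂ B]

section LeftAction

variable (A B) (M : Type) [AddCommGroup M] [Module ℂ M] [Module B M] [IsScalarTower ℂ B M]
  [SMulCommClass B ℂ M]

/-- The left action of `B` on `M` as a bilinear map. -/
def leftSMul : B →ₗ[ℂ] M →ₗ[ℂ] M :=
  LinearMap.mk₂ ℂ (fun b m => b • m) add_smul smul_assoc smul_add fun c b m => smul_comm b c m

/-- The left action of `A ⊗ B` on `A ⊗ M`. -/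
def tensorLeftSMul : A ⊗[ℂ] B →ₗ[ℂ] A ⊗[ℂ] M →ₗ[ℂ] A ⊗[ℂ] M :=
  TensorProduct.map₂ (LinearMap.mul ℂ A) (leftSMul B M)

variable {A B M}

@[simp]
lemma leftSMul_apply (b : B) (m : M) : leftSMul B M b m = b • m := rfl

@[simp]
lemma tensorLeftSMul_tmul (a a' : A) (b : B) (m : M) :
    tensorLeftSMul A B M (a ⊗ₜ b) (a' ⊗ₜ m) = (a * a') ⊗ₜ (b • m) := rfl

lemma IsRelHopfModule.coaction_smul [Module Bᵐᵒᵖ M] [SMulCommClass Bᵐᵒᵖ ℂ M]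
    {δB : Coaction A B} {cM : Coaction A M} (h : IsRelHopfModule δB cM) (b : B) (m : M) :
    cM.ρ (b • m) = tensorLeftSMul A B M (δB.ρ b) (cM.ρ m) := by
  obtain ⟨n, a, c, hb⟩ := TensorProduct.exists_sum_tmul_eq (δB.ρ b)
  rw [h.1 b m n a c hb, hb, map_sum, LinearMap.sum_apply]
  rfl

end LeftAction

section RightAction

variable (A B) (M : Type) [AddCommGroup M] [Module ℂ M] [Module Bᵐᵒᵖ M] [IsScalarTower ℂ Bᵐᵒᵖ M]
  [SMulCommClass Bᵐᵒᵖ ℂ M]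

/-- The right action of `B` on `M` as a bilinear map. -/
def rightSMul : M →ₗ[ℂ] B →ₗ[ℂ] M :=
  LinearMap.mk₂ ℂ (fun m b => op b • m) (fun _ _ _ => smul_add _ _ _)
    (fun c m b => smul_comm (op b) c m) (fun _ _ _ => by rw [op_add, add_smul])
    fun c m b => by rw [op_smul, smul_assoc]

/-- The right action of `A ⊗ B` on `A ⊗ M`. -/
def tensorRightSMul : A ⊗[ℂ] M →ₗ[ℂ] A ⊗[ℂ] B →ₗ[ℂ] A ⊗[ℂ] M :=
  TensorProduct.map₂ (LinearMap.mul ℂ A) (rightSMul B M)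

variable {A B M}

@[simp]
lemma rightSMul_apply (b : B) (m : M) : rightSMul B M m b = op b • m := rfl

@[simp]
lemma tensorRightSMul_tmul (a a' : A) (b : B) (m : M) :
    tensorRightSMul A B M (a' ⊗ₜ m) (a ⊗ₜ b) = (a' * a) ⊗ₜ (op b • m) := rfl

lemma IsRelHopfModule.coaction_op_smul [Module B M] [SMulCommClass B ℂ M]
    {δB : Coaction A B} {cM : Coaction A M} (h : IsRelHopfModule δB cM) (b : B) (m : M) :
    cM.ρ (op b • m) = tensorRightSMul A B M (cM.ρ m) (δB.ρ b) := by
  obtain ⟨n, a, c, hb⟩ := TensorProduct.exists_sum_tmul_eq (δB.ρ b)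
  rw [h.2 b m n a c hb, hb, map_sum]
  refine Finset.sum_congr rfl fun i _ => ?_
  generalize cM.ρ m = X
  induction X with
  | zero => simp
  | add u v hu hv => simp only [map_add, LinearMap.add_apply, hu, hv]
  | tmul u v => rfl

end RightAction

section Plus

variable (ι : B →ₐ[ℂ] A)

/-- The subspace `B⁺M` of `M`. -/
def plusSubmodule (M : Type) [AddCommGroup M] [Module ℂ M] [Module B M] : Submodule ℂ M :=
  Submodule.span ℂ {x : M | ∃ (b : B) (m : M), counit (R := ℂ) (ι b) = 0 ∧ x = b • m}

variable {ι} {M N : Type} [AddCommGroup M] [Module ℂ M] [Module B M] [AddCommGroup N] [Module ℂ N]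

lemma map_smul_of_plusSubmodule_le_ker [IsScalarTower ℂ B M] {g : M →ₗ[ℂ] N}
    (hg : plusSubmodule ι M ≤ LinearMap.ker g)
    (b : B) (m : M) : g (b • m) = counit (R := ℂ) (ι b) • g m := by
  have h : g ((b - algebraMap ℂ B (counit (R := ℂ) (ι b))) • m) = 0 :=
    hg (Submodule.subset_span ⟨_, m, by simp, rfl⟩)
  rwa [sub_smul, algebraMap_smul, map_sub, LinearMap.map_smul g, sub_eq_zero] at h

lemma map_op_smul_of_plusSubmodule_le_ker [Module Bᵐᵒᵖ M] [IsScalarTower ℂ Bᵐᵒᵖ M]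
    {g : M →ₗ[ℂ] N}
    (hg : plusSubmodule ι M ≤ LinearMap.ker g)
    (hM : ∀ (b : B) (m : M), counit (R := ℂ) (ι b) = 0 → op b • m ∈ plusSubmodule ι M)
    (b : B) (m : M) : g (op b • m) = counit (R := ℂ) (ι b) • g m := by
  have h : g (op (b - algebraMap ℂ B (counit (R := ℂ) (ι b))) • m) = 0 :=
    hg (hM _ m (by simp))
  rwa [op_sub, sub_smul, ← MulOpposite.algebraMap_apply, algebraMap_smul, map_sub,
    LinearMap.map_smul g, sub_eq_zero] at h

/-- `id ⊗ ε : A ⊗ B → A`. -/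
def counitRight (ι : B →ₐ[ℂ] A) : A ⊗[ℂ] B →ₗ[ℂ] A :=
  (TensorProduct.rid ℂ A).toLinearMap ∘ₗ LinearMap.lTensor A (counit ∘ₗ ι.toLinearMap)

@[simp]
lemma counitRight_tmul (a : A) (b : B) :
    counitRight ι (a ⊗ₜ b) = counit (R := ℂ) (ι b) • a := by
  simp [counitRight]

lemma counitRight_coaction {δB : Coaction A B}
    (hδB_comul : ∀ b : B,
      (TensorProduct.map LinearMap.id ι.toLinearMap) (δB.ρ b) = comul (R := ℂ) (ι b)) (b : B) :
    counitRight ι (δB.ρ b) = ι b := by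
  rw [counitRight, LinearMap.lTensor_comp, LinearMap.comp_apply, LinearMap.comp_apply,
    LinearMap.lTensor, LinearMap.lTensor, hδB_comul]
  change TensorProduct.rid ℂ A (LinearMap.lTensor A counit _) = _
  rw [lTensor_counit_comul, TensorProduct.rid_tmul, one_smul]

end Plus

section Averaging

variable (E : A →ₗ[ℂ] B) {M : Type} [AddCommGroup M] [Module ℂ M] [Module B M]
  [IsScalarTower ℂ B M] [SMulCommClass B ℂ M]

variable (M) in
/-- The map `a ⊗ (x ⊗ m) ↦ E(a S(x)) m`. -/
def twistedAction : A →ₗ[ℂ] A ⊗[ℂ] M →ₗ[ℂ] M :=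
  (TensorProduct.lift.equiv (.id ℂ) A M M).toLinearMap ∘ₗ
    ((LinearMap.mul ℂ A).compr₂ (leftSMul B M ∘ₗ E)).compl₂ (antipode ℂ)

@[simp]
lemma twistedAction_tmul (a x : A) (m : M) :
    twistedAction E M a (x ⊗ₜ m) = E (a * antipode ℂ x) • m := rfl

/-- The map `a ⊗ m ↦ E(a S(m₋₁)) m₀`. -/
def averaging (cM : Coaction A M) : A →ₗ[ℂ] M →ₗ[ℂ] M :=
  (twistedAction E M).compl₂ cM.ρ

variable {E} {cM : Coaction A M} {δB : Coaction A B} {ι : B →ₐ[ℂ] A}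

lemma averaging_apply (a : A) (m : M) :
    averaging E cM a m = twistedAction E M a (cM.ρ m) := rfl

lemma averaging_mul_left (hE : ∀ b a, E (ι b * a) = b * E a) (b : B) (a : A) (m : M) :
    averaging E cM (ι b * a) m = b • averaging E cM a m := by
  rw [averaging_apply, averaging_apply]
  generalize cM.ρ m = X
  induction X with
  | zero => simp
  | add u v hu hv => simp only [map_add, smul_add, hu, hv]
  | tmul u v => simp [mul_assoc, hE, mul_smul]

lemma lift_averaging_coaction (hE : E 1 = 1) (m : M) :
    TensorProduct.lift (averaging E cM) (cM.ρ m) = m := by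
  let J : A ⊗[ℂ] M →ₗ[ℂ] M := TensorProduct.lift (leftSMul B M ∘ₗ E)
  have hJ : TensorProduct.lift (averaging E cM) = J ∘ₗ LinearMap.rTensor M
      (LinearMap.mul' ℂ A ∘ₗ LinearMap.lTensor A (antipode ℂ)) ∘ₗ
      (TensorProduct.assoc ℂ A A M).symm.toLinearMap ∘ₗ LinearMap.lTensor A cM.ρ := by
    refine TensorProduct.ext' fun a m => ?_
    simp only [TensorProduct.lift.tmul, averaging_apply, LinearMap.comp_apply,
      LinearMap.lTensor_tmul]
    generalize cM.ρ m = X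
    induction X with
    | zero => simp
    | add u v hu hv => simp only [map_add, TensorProduct.tmul_add, hu, hv]
    | tmul x m => simp [J]
  rw [hJ]
  simp only [LinearMap.comp_apply, LinearEquiv.coe_coe]
  rw [cM.mul_antipode_rTensor]
  simp [J, hE]

lemma map_averaging {N : Type} [AddCommGroup N] [Module ℂ N] [Module B N]
    [IsScalarTower ℂ B N] [SMulCommClass B ℂ N] {cN : Coaction A N}
    {f : M →ₗ[ℂ] N} (hf : ∀ (b : B) (m : M), f (b • m) = b • f m) (hfc : IsCovariant cM cN f)
    (a : A) (m : M) : f (averaging E cM a m) = averaging E cN a (f m) := by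
  rw [averaging_apply, averaging_apply, hfc]
  generalize cM.ρ m = X
  induction X with
  | zero => simp
  | add u v hu hv => simp only [map_add, hu, hv]
  | tmul x m => simp [hf]

variable [Module Bᵐᵒᵖ M] [SMulCommClass Bᵐᵒᵖ ℂ M]

lemma averaging_smul (hE : ∀ a b, E (a * ι b) = E a * b) (hM : IsRelHopfModule δB cM)
    (hδB_comul : ∀ b : B,
      (TensorProduct.map LinearMap.id ι.toLinearMap) (δB.ρ b) = comul (R := ℂ) (ι b))
    (a : A) (b : B) (m : M) :
    averaging E cM a (b • m) = counit (R := ℂ) (ι b) • averaging E cM a m := by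
  rw [averaging_apply, averaging_apply, hM.coaction_smul]
  let V : A ⊗[ℂ] B →ₗ[ℂ] A := LinearMap.mul' ℂ A ∘ₗ
    LinearMap.rTensor A (antipode ℂ) ∘ₗ TensorProduct.map LinearMap.id ι.toLinearMap
  have hV : V (δB.ρ b) = algebraMap ℂ A (counit (R := ℂ) (ι b)) := by
    simp only [V, LinearMap.comp_apply, hδB_comul, mul_antipode_rTensor_comul_apply]
  generalize cM.ρ m = X
  induction X with
  | zero => simp
  | add u v hu hv => simp only [map_add, smul_add, hu, hv]
  | tmul x m =>
    have h : ∀ Y, twistedAction E M a (tensorLeftSMul A B M Y (x ⊗ₜ m)) =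
        E (a * antipode ℂ x * V Y) • m := by
      intro Y
      induction Y with
      | zero => simp
      | add u v hu hv => simp only [map_add, LinearMap.add_apply, mul_add, add_smul, hu, hv]
      | tmul y c =>
        simp [V, antipode_mul_antidistrib, ← mul_assoc, hE, mul_smul]
    rw [h, hV, ← Algebra.commutes, ← Algebra.smul_def, map_smul, smul_assoc, twistedAction_tmul]

lemma plusSubmodule_le_ker_averaging (hE : ∀ a b, E (a * ι b) = E a * b)
    (hM : IsRelHopfModule δB cM)
    (hδB_comul : ∀ b : B,
      (TensorProduct.map LinearMap.id ι.toLinearMap) (δB.ρ b) = comul (R := ℂ) (ι b)) (a : A) :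
    plusSubmodule ι M ≤ LinearMap.ker (averaging E cM a) := by
  refine Submodule.span_le.2 ?_
  rintro _ ⟨b, m, hb, rfl⟩
  rw [SetLike.mem_coe, LinearMap.mem_ker, averaging_smul hE hM hδB_comul, hb, zero_smul]

lemma averaging_mul_right [IsScalarTower ℂ Bᵐᵒᵖ M] [SMulCommClass B Bᵐᵒᵖ M]
    (hE : ∀ a b, E (a * ι b) = E a * b) (hM : IsRelHopfModule δB cM)
    (hδB_comul : ∀ b : B,
      (TensorProduct.map LinearMap.id ι.toLinearMap) (δB.ρ b) = comul (R := ℂ) (ι b))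
    (hplus : ∀ (b : B) (m : M), counit (R := ℂ) (ι b) = 0 → op b • m ∈ plusSubmodule ι M)
    (a : A) (b : B) (m : M) :
    averaging E cM (a * ι b) m = op b • averaging E cM a m := by
  let G (X : A ⊗[ℂ] M) : A ⊗[ℂ] (A ⊗[ℂ] B) →ₗ[ℂ] M :=
    TensorProduct.lift
      ((twistedAction E M ∘ₗ LinearMap.mulLeft ℂ a).compl₂ (tensorRightSMul A B M X))
  have hG : ∀ X x Z, G X (x ⊗ₜ Z) = twistedAction E M (a * x) (tensorRightSMul A B M X Z) :=
    fun _ _ _ => rfl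
  have h1 : G (cM.ρ m) (LinearMap.lTensor A δB.ρ (δB.ρ b)) = averaging E cM (a * ι b) m := by
    rw [← counitRight_coaction hδB_comul b]
    generalize δB.ρ b = Y
    induction Y with
    | zero => simp
    | add u v hu hv => simp only [map_add, LinearMap.add_apply, mul_add, hu, hv]
    | tmul y c =>
      rw [LinearMap.lTensor_tmul, hG, ← hM.coaction_op_smul, ← averaging_apply,
        map_op_smul_of_plusSubmodule_le_ker
          (plusSubmodule_le_ker_averaging hE hM hδB_comul _) hplus]
      simp
  have h2 : ∀ X, G X (LinearMap.lTensor A δB.ρ (δB.ρ b)) = op b • twistedAction E M a X := by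
    intro X
    induction X with
    | zero =>
      have h0 : G 0 = 0 := TensorProduct.ext' fun x Z => by
        simp only [hG, map_zero, LinearMap.zero_apply]
      rw [h0, LinearMap.zero_apply, map_zero, smul_zero]
    | add u v hu hv =>
      rw [map_add, smul_add, ← hu, ← hv, ← LinearMap.add_apply]
      congr 1
      refine TensorProduct.ext' fun x Z => ?_
      simp only [LinearMap.add_apply, hG, map_add]
    | tmul x m =>
      let J : A ⊗[ℂ] B →ₗ[ℂ] M := TensorProduct.lift
        ((leftSMul B M ∘ₗ E ∘ₗ LinearMap.mulRight ℂ (antipode ℂ x) ∘ₗ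
          LinearMap.mulLeft ℂ a).compl₂ (rightSMul B M m))
      have hJ : ∀ Z, G (x ⊗ₜ m) Z = J (LinearMap.rTensor B
          (LinearMap.mul' ℂ A ∘ₗ LinearMap.lTensor A (antipode ℂ))
          ((TensorProduct.assoc ℂ A A B).symm Z)) := by
        intro Z
        induction Z with
        | zero => simp
        | add u v hu hv => simp only [map_add, hu, hv]
        | tmul y Z =>
          induction Z with
          | zero => simp
          | add u v hu hv => simp only [map_add, TensorProduct.tmul_add, hu, hv]
          | tmul z c => simp [hG, J, antipode_mul_antidistrib, mul_assoc]
      rw [hJ, δB.mul_antipode_rTensor]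
      simp [J, smul_comm]
  rw [← h1, h2, averaging_apply]

lemma coaction_averaging (hE : ∀ a, δB.ρ (E a) = LinearMap.lTensor A E (comul (R := ℂ) a))
    (hM : IsRelHopfModule δB cM) (a : A) (m : M) :
    cM.ρ (averaging E cM a m) =
      LinearMap.lTensor A ((averaging E cM).flip m) (comul (R := ℂ) a) := by
  let G : A ⊗[ℂ] (A ⊗[ℂ] M) →ₗ[ℂ] A ⊗[ℂ] M := TensorProduct.lift
    (tensorLeftSMul A B M ∘ₗ LinearMap.lTensor A E ∘ₗ comul ∘ₗ LinearMap.mulLeft ℂ a ∘ₗ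
      antipode ℂ)
  have h1 : ∀ X, cM.ρ (twistedAction E M a X) = G (LinearMap.lTensor A cM.ρ X) := by
    intro X
    induction X with
    | zero => simp
    | add u v hu hv => simp only [map_add, hu, hv]
    | tmul x m => simp [G, hM.coaction_smul, hE]
  have h2 : ∀ X, G (TensorProduct.assoc ℂ A A M (LinearMap.rTensor M comul X)) =
      LinearMap.lTensor A ((twistedAction E M).flip X) (comul (R := ℂ) a) := by
    intro X
    induction X with
    | zero => simp
    | add u v hu hv => simp only [map_add, hu, hv, LinearMap.lTensor_add, LinearMap.add_apply]
    | tmul x m =>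
      let Q : A ⊗[ℂ] A →ₗ[ℂ] A ⊗[ℂ] M := LinearMap.lTensor A ((leftSMul B M).flip m ∘ₗ E)
      have h3 : ∀ (W : A ⊗[ℂ] A) (y : A),
          tensorLeftSMul A B M (LinearMap.lTensor A E W) (y ⊗ₜ m) = Q (W * (y ⊗ₜ 1)) := by
        intro W y
        induction W with
        | zero => simp
        | add u v hu hv => simp only [map_add, LinearMap.add_apply, add_mul, hu, hv]
        | tmul u v => simp [Q]
      have h4 : ∀ Z : A ⊗[ℂ] A, G (TensorProduct.assoc ℂ A A M (Z ⊗ₜ m)) =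
          Q (comul (R := ℂ) a * LinearMap.mul' ℂ (A ⊗[ℂ] A) (TensorProduct.map
            (comul ∘ₗ antipode ℂ)
            (Algebra.TensorProduct.includeLeft : A →ₐ[ℂ] A ⊗[ℂ] A).toLinearMap Z)) := by
        intro Z
        induction Z with
        | zero => simp
        | add u v hu hv => simp only [map_add, TensorProduct.add_tmul, mul_add, hu, hv]
        | tmul u v => simp [G, h3, mul_assoc]
      have h5 := LinearMap.congr_fun
        (congrArg WithConv.ofConv (comul_antipode_convMul_includeLeft (A := A))) x
      simp only [LinearMap.convMul_def, LinearMap.comp_apply] at h5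
      rw [LinearMap.rTensor_tmul, h4, h5]
      generalize comul (R := ℂ) a = W
      induction W with
      | zero => simp
      | add u v hu hv => simp only [map_add, add_mul, hu, hv]
      | tmul u v => simp [Q]
  have h6 : TensorProduct.assoc ℂ A A M (LinearMap.rTensor M comul (cM.ρ m)) =
      LinearMap.lTensor A cM.ρ (cM.ρ m) := by
    rw [cM.coassoc, LinearEquiv.apply_symm_apply]
  rw [averaging_apply, h1, ← h6, h2]
  rfl

end Averaging

/-- A surjective morphism of relative Hopf modules splits as soon as there is an `A`-covariant
`B`-bilinear unital projection `A → B`. -/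
theorem exists_relHopf_section {ι : B →ₐ[ℂ] A} {δB : Coaction A B}
    (hδB_comul : ∀ b : B,
      (TensorProduct.map LinearMap.id ι.toLinearMap) (δB.ρ b) = comul (R := ℂ) (ι b))
    {E : A →ₗ[ℂ] B} (hE1 : E 1 = 1) (hEl : ∀ b a, E (ι b * a) = b * E a)
    (hEr : ∀ a b, E (a * ι b) = E a * b)
    (hEc : ∀ a, δB.ρ (E a) = LinearMap.lTensor A E (comul (R := ℂ) a))
    {M N : Type} [AddCommGroup M] [Module ℂ M] [Module B M] [Module Bᵐᵒᵖ M]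
    [IsScalarTower ℂ B M] [IsScalarTower ℂ Bᵐᵒᵖ M] [SMulCommClass B ℂ M]
    [SMulCommClass Bᵐᵒᵖ ℂ M] [SMulCommClass B Bᵐᵒᵖ M]
    [AddCommGroup N] [Module ℂ N] [Module B N] [Module Bᵐᵒᵖ N]
    [IsScalarTower ℂ B N] [IsScalarTower ℂ Bᵐᵒᵖ N] [SMulCommClass B ℂ N] [SMulCommClass Bᵐᵒᵖ ℂ N]
    {cM : Coaction A M} {cN : Coaction A N}
    (hM : IsRelHopfModule δB cM) (hN : IsRelHopfModule δB cN)
    (hMplus : ∀ (b : B) (m : M), counit (R := ℂ) (ι b) = 0 → op b • m ∈ plusSubmodule ι M)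
    (hNplus : ∀ (b : B) (n : N), counit (R := ℂ) (ι b) = 0 → op b • n ∈ plusSubmodule ι N)
    {f : M →ₗ[ℂ] N} (hf : IsBimoduleMap (B := B) f) (hfc : IsCovariant cM cN f)
    (hfs : Function.Surjective f) :
    ∃ s : N →ₗ[ℂ] M, IsBimoduleMap (B := B) s ∧ IsCovariant cN cM s ∧ ∀ x, f (s x) = x := by
  obtain ⟨g, hg⟩ := f.exists_rightInverse_of_surjective (LinearMap.range_eq_top.2 hfs)
  obtain ⟨σ, hσ⟩ := (plusSubmodule ι N).mkQ.exists_rightInverse_of_surjective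
    (Submodule.range_mkQ _)
  let q : N →ₗ[ℂ] M := g ∘ₗ σ ∘ₗ (plusSubmodule ι N).mkQ
  have hq : plusSubmodule ι N ≤ LinearMap.ker q := fun x hx => by
    simp [q, (Submodule.Quotient.mk_eq_zero _).2 hx]
  have hfq : ∀ n, f (q n) - n ∈ plusSubmodule ι N := fun n => by
    rw [← Submodule.Quotient.mk_eq_zero, Submodule.Quotient.mk_sub, sub_eq_zero]
    have h1 : f (q n) = σ ((plusSubmodule ι N).mkQ n) := LinearMap.congr_fun hg _
    rw [h1]
    exact LinearMap.congr_fun hσ _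
  let L : A ⊗[ℂ] N →ₗ[ℂ] M := TensorProduct.lift ((averaging E cM).compl₂ q)
  have hL : ∀ a n, L (a ⊗ₜ n) = averaging E cM a (q n) := fun _ _ => rfl
  refine ⟨L ∘ₗ cN.ρ, ⟨fun b n => ?_, fun b n => ?_⟩, fun n => ?_, fun n => ?_⟩
  · simp only [LinearMap.comp_apply]
    rw [hN.coaction_smul]
    generalize cN.ρ n = X
    induction X with
    | zero => simp
    | add u v hu hv => simp only [map_add, smul_add, hu, hv]
    | tmul x n =>
      have h : ∀ Y, L (tensorLeftSMul A B N Y (x ⊗ₜ n)) =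
          averaging E cM (counitRight ι Y * x) (q n) := by
        intro Y
        induction Y with
        | zero => simp
        | add u v hu hv => simp only [map_add, LinearMap.add_apply, add_mul, hu, hv]
        | tmul y c => simp [hL, map_smul_of_plusSubmodule_le_ker hq]
      rw [h, counitRight_coaction hδB_comul, averaging_mul_left hEl, hL]
  · simp only [LinearMap.comp_apply]
    rw [hN.coaction_op_smul]
    generalize cN.ρ n = X
    induction X with
    | zero => simp
    | add u v hu hv => simp only [map_add, LinearMap.add_apply, smul_add, hu, hv]
    | tmul x n =>
      have h : ∀ Y, L (tensorRightSMul A B N (x ⊗ₜ n) Y) =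
          averaging E cM (x * counitRight ι Y) (q n) := by
        intro Y
        induction Y with
        | zero => simp
        | add u v hu hv => simp only [map_add, LinearMap.add_apply, mul_add, hu, hv]
        | tmul y c => simp [hL, map_op_smul_of_plusSubmodule_le_ker hq hNplus]
      rw [h, counitRight_coaction hδB_comul,
        averaging_mul_right hEr hM hδB_comul hMplus, hL]
  · have h1 : ∀ X, cM.ρ (L X) = LinearMap.lTensor A L
        (TensorProduct.assoc ℂ A A N (LinearMap.rTensor N comul X)) := by
      intro X
      induction X with
      | zero => simp
      | add u v hu hv => simp only [map_add, hu, hv]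
      | tmul x n =>
        rw [hL, coaction_averaging hEc hM, LinearMap.rTensor_tmul]
        generalize comul (R := ℂ) x = W
        induction W with
        | zero => simp
        | add u v hu hv => simp only [map_add, TensorProduct.add_tmul, hu, hv]
        | tmul u v => simp [hL]
    rw [LinearMap.comp_apply, h1, cN.coassoc, LinearEquiv.apply_symm_apply,
      LinearMap.lTensor_comp, LinearMap.comp_apply]
  · have h1 : f ∘ₗ L = TensorProduct.lift (averaging E cN) := by
      refine TensorProduct.ext' fun a n => ?_
      rw [LinearMap.comp_apply, hL, map_averaging hf.1 hfc, TensorProduct.lift.tmul,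
        ← sub_eq_zero, ← map_sub]
      exact plusSubmodule_le_ker_averaging hEr hN hδB_comul a (hfq n)
    rw [LinearMap.comp_apply, ← LinearMap.comp_apply f, h1, lift_averaging_coaction hE1]

end RelativeHopfModules

section Calculi

variable {B : Type} [Ring B] [Algebra ℂ B]
  {Ω : Type} [AddCommGroup Ω] [Module ℂ Ω] [Module B Ω] [Module Bᵐᵒᵖ Ω]

lemma FODC.map_algebraMap (D : FODC B Ω) (c : ℂ) : D.d (algebraMap ℂ B c) = 0 := by
  have h := D.leibniz 1 1
  rw [mul_one, op_one, one_smul, one_smul, left_eq_add] at h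
  rw [Algebra.algebraMap_eq_smul_one, map_smul, h, smul_zero]

variable [SMulCommClass B ℂ Ω]

lemma FODC.isScalarTower (D : FODC B Ω) : IsScalarTower ℂ B Ω := by
  refine IsScalarTower.of_algebraMap_smul fun c x => ?_
  refine LinearMap.congr_fun (f := DistribSMul.toLinearMap ℂ Ω (algebraMap ℂ B c))
    (g := c • LinearMap.id) (LinearMap.ext_on D.generates ?_) x
  rintro _ ⟨a, b, rfl⟩
  change algebraMap ℂ B c • a • D.d b = c • a • D.d b
  have h := D.leibniz (algebraMap ℂ B c) b
  rw [D.map_algebraMap, smul_zero, add_zero, ← Algebra.smul_def, map_smul] at h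
  rw [← mul_smul, Algebra.commutes, mul_smul, ← h, smul_comm]

variable [SMulCommClass Bᵐᵒᵖ ℂ Ω]

lemma FODC.smulCommClass (D : FODC B Ω) : SMulCommClass B Bᵐᵒᵖ Ω where
  smul_comm a c x := by
    have h : ∀ a b c : B, a • op c • D.d b = op c • a • D.d b := by
      intro a b c
      have h1 := congrArg D.d (mul_assoc a b c)
      simp only [D.leibniz, op_mul, mul_smul, smul_add, ← add_assoc, add_left_inj,
        add_right_inj] at h1
      exact h1.symm
    induction c using MulOpposite.rec' with | _ c =>
    refine LinearMap.congr_fun (f := DistribSMul.toLinearMap ℂ Ω a ∘ₗ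
      DistribSMul.toLinearMap ℂ Ω (op c)) (g := DistribSMul.toLinearMap ℂ Ω (op c) ∘ₗ
      DistribSMul.toLinearMap ℂ Ω a) (LinearMap.ext_on D.generates ?_) x
    rintro _ ⟨a', b, rfl⟩
    change a • op c • a' • D.d b = op c • a • a' • D.d b
    rw [← h, ← mul_smul, h, mul_smul]

lemma FODC.isScalarTower_op (D : FODC B Ω) : IsScalarTower ℂ Bᵐᵒᵖ Ω := by
  have := D.smulCommClass
  refine IsScalarTower.of_algebraMap_smul fun c x => ?_
  refine LinearMap.congr_fun (f := DistribSMul.toLinearMap ℂ Ω (algebraMap ℂ Bᵐᵒᵖ c))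
    (g := c • LinearMap.id) (LinearMap.ext_on D.generates ?_) x
  rintro _ ⟨a, b, rfl⟩
  change algebraMap ℂ Bᵐᵒᵖ c • a • D.d b = c • a • D.d b
  have h := D.leibniz b (algebraMap ℂ B c)
  rw [D.map_algebraMap, smul_zero, zero_add, ← Algebra.commutes, ← Algebra.smul_def,
    map_smul] at h
  rw [MulOpposite.algebraMap_apply, ← smul_comm, ← h, smul_comm]

end Calculi

section BalancedTensor

variable {B : Type} [Ring B] [Algebra ℂ B]
  {M N T : Type} [AddCommGroup M] [Module ℂ M] [Module B M] [Module Bᵐᵒᵖ M]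
  [AddCommGroup N] [Module ℂ N] [Module B N] [Module Bᵐᵒᵖ N]
  [AddCommGroup T] [Module ℂ T] [Module B T] [Module Bᵐᵒᵖ T]

lemma BalPair.smulCommClass [SMulCommClass B ℂ T] [SMulCommClass Bᵐᵒᵖ ℂ T]
    (P : BalPair B M N T) : SMulCommClass B Bᵐᵒᵖ T where
  smul_comm a c x := by
    induction c using MulOpposite.rec' with | _ c =>
    refine LinearMap.congr_fun (f := DistribSMul.toLinearMap ℂ T a ∘ₗ
      DistribSMul.toLinearMap ℂ T (op c)) (g := DistribSMul.toLinearMap ℂ T (op c) ∘ₗ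
      DistribSMul.toLinearMap ℂ T a) (LinearMap.ext_on P.tp_span ?_) x
    rintro _ ⟨m, n, rfl⟩
    change a • op c • P.tp m n = op c • a • P.tp m n
    rw [← P.tp_right, ← P.tp_left, ← P.tp_left, P.tp_right]

lemma BalPair.isScalarTower [IsScalarTower ℂ B M] [SMulCommClass B ℂ T]
    (P : BalPair B M N T) : IsScalarTower ℂ B T := by
  refine IsScalarTower.of_algebraMap_smul fun c x => ?_
  refine LinearMap.congr_fun (f := DistribSMul.toLinearMap ℂ T (algebraMap ℂ B c))
    (g := c • LinearMap.id) (LinearMap.ext_on P.tp_span ?_) x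
  rintro _ ⟨m, n, rfl⟩
  change algebraMap ℂ B c • P.tp m n = c • P.tp m n
  rw [← P.tp_left, algebraMap_smul, LinearMap.map_smul, LinearMap.smul_apply]

lemma BalPair.isScalarTower_op [IsScalarTower ℂ Bᵐᵒᵖ N] [SMulCommClass Bᵐᵒᵖ ℂ T]
    (P : BalPair B M N T) : IsScalarTower ℂ Bᵐᵒᵖ T := by
  refine IsScalarTower.of_algebraMap_smul fun c x => ?_
  refine LinearMap.congr_fun (f := DistribSMul.toLinearMap ℂ T (algebraMap ℂ Bᵐᵒᵖ c))
    (g := c • LinearMap.id) (LinearMap.ext_on P.tp_span ?_) x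
  rintro _ ⟨m, n, rfl⟩
  change algebraMap ℂ Bᵐᵒᵖ c • P.tp m n = c • P.tp m n
  rw [MulOpposite.algebraMap_apply, ← P.tp_right, ← MulOpposite.algebraMap_apply,
    algebraMap_smul, LinearMap.map_smul]

lemma IsBimoduleMap.isScalarTower [IsScalarTower ℂ B M] {f : M →ₗ[ℂ] N}
    (hf : IsBimoduleMap (B := B) f) (hfs : Function.Surjective f) : IsScalarTower ℂ B N := by
  refine IsScalarTower.of_algebraMap_smul fun c x => ?_
  obtain ⟨m, rfl⟩ := hfs x
  rw [← hf.1, algebraMap_smul, LinearMap.map_smul]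

lemma IsBimoduleMap.isScalarTower_op [IsScalarTower ℂ Bᵐᵒᵖ M] {f : M →ₗ[ℂ] N}
    (hf : IsBimoduleMap (B := B) f) (hfs : Function.Surjective f) : IsScalarTower ℂ Bᵐᵒᵖ N := by
  refine IsScalarTower.of_algebraMap_smul fun c x => ?_
  obtain ⟨m, rfl⟩ := hfs x
  rw [MulOpposite.algebraMap_apply, ← hf.2, ← MulOpposite.algebraMap_apply, algebraMap_smul,
    LinearMap.map_smul]

/-- If `MB⁺ ⊆ B⁺M` and `NB⁺ ⊆ B⁺N`, then `(M ⊗_B N)B⁺ ⊆ B⁺(M ⊗_B N)`. -/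
lemma BalPair.op_smul_mem_plusSubmodule {A : Type} [Ring A] [HopfAlgebra ℂ A] {ι : B →ₐ[ℂ] A}
    [SMulCommClass Bᵐᵒᵖ ℂ T] (P : BalPair B M N T)
    (hM : ∀ (b : B) (m : M), Coalgebra.counit (R := ℂ) (ι b) = 0 → op b • m ∈ plusSubmodule ι M)
    (hN : ∀ (b : B) (n : N), Coalgebra.counit (R := ℂ) (ι b) = 0 → op b • n ∈ plusSubmodule ι N)
    (b : B) (t : T) (hb : Coalgebra.counit (R := ℂ) (ι b) = 0) :
    op b • t ∈ plusSubmodule ι T := by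
  have h1 : ∀ n : N, plusSubmodule ι M ≤ (plusSubmodule ι T).comap (P.tp.flip n) := by
    refine fun n => Submodule.span_le.2 ?_
    rintro _ ⟨b, m, hb, rfl⟩
    exact Submodule.subset_span ⟨b, P.tp m n, hb, P.tp_left b m n⟩
  have h2 : ∀ m : M, plusSubmodule ι N ≤ (plusSubmodule ι T).comap (P.tp m) := by
    refine fun m => Submodule.span_le.2 ?_
    rintro _ ⟨b, n, hb, rfl⟩
    rw [SetLike.mem_coe, Submodule.mem_comap, ← P.tp_mid]
    exact h1 n (hM b m hb)
  suffices h : (⊤ : Submodule ℂ T) ≤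
      (plusSubmodule ι T).comap (DistribSMul.toLinearMap ℂ T (op b)) from
    h Submodule.mem_top
  rw [← P.tp_span, Submodule.span_le]
  rintro _ ⟨m, n, rfl⟩
  change op b • P.tp m n ∈ plusSubmodule ι T
  rw [← P.tp_right]
  exact h2 m (hN b n hb)

end BalancedTensor

/-! ## STATEMENT 13 -/

/-- covariant quasi-tameness over quantum homogeneous spaces.
Let `π : A → H` be a surjective map of Hopf algebras, `B = A^{co(H)}` the coinvariant
subalgebra, a quantum homogeneous space (`A` is faithfully flat as a right `B`-module),
and let `H` be cosemisimple.  If `(Ω•, ∧, d)` is an `A`-covariant differential calculus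
on `B` such that each `Ω^k` belongs to `^A_0Mod_B`, then the calculus is covariantly
quasi-tame: there is an `A`-covariant `B`-bimodule map `s : Ω² → Ω¹ ⊗_B Ω¹` with
`∧ ∘ s = id`. -/
theorem statement13
    -- Hopf algebras A and H, with a surjective Hopf algebra map π : A → H
    {A : Type} [Ring A] [HopfAlgebra ℂ A]
    {H : Type} [Ring H] [HopfAlgebra ℂ H]
    (π : BialgHom ℂ A H) (hπ_surj : Function.Surjective π)
    -- B = A^{co(H)}, the coinvariant subalgebra
    {B : Type} [Ring B] [Algebra ℂ B]
    (ι : B →ₐ[ℂ] A) (hι : Function.Injective ι)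
    (hcoinv : ∀ a : A, a ∈ Set.range ι ↔
      (LinearMap.lTensor A π.toLinearMap) (Coalgebra.comul (R := ℂ) a) = a ⊗ₜ (1 : H))
    -- A as a right B-module, via right multiplication through ι
    [Module Bᵐᵒᵖ A] (hAmod : ∀ (b : B) (a : A), op b • a = a * ι b)
    -- B is a quantum homogeneous space: A is faithfully flat as a right B-module
    (hff : RightFaithfullyFlat B A)
    -- H is cosemisimple
    (hcosemi : IsCosemisimple H)
    -- the coaction of A on B (the restriction of the coproduct of A)
    (δB : Coaction A B) (hδB_alg : IsComoduleAlgebra δB)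
    (hδB_comul : ∀ b : B,
      (TensorProduct.map LinearMap.id ι.toLinearMap) (δB.ρ b) = Coalgebra.comul (R := ℂ) (ι b))
    -- the A-covariant differential calculus on B (degrees 1 and 2)
    {Ω T Ω2 : Type} [AddCommGroup Ω] [Module ℂ Ω] [Module B Ω] [Module Bᵐᵒᵖ Ω]
    [SMulCommClass B ℂ Ω] [SMulCommClass Bᵐᵒᵖ ℂ Ω]
    [AddCommGroup T] [Module ℂ T] [Module B T] [Module Bᵐᵒᵖ T]
    [SMulCommClass B ℂ T] [SMulCommClass Bᵐᵒᵖ ℂ T]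
    [AddCommGroup Ω2] [Module ℂ Ω2] [Module B Ω2] [Module Bᵐᵒᵖ Ω2]
    [SMulCommClass B ℂ Ω2] [SMulCommClass Bᵐᵒᵖ ℂ Ω2]
    (P : BalPair B Ω Ω T) (D : FODC B Ω)
    (wedge : T →ₗ[ℂ] Ω2) (hwedge : IsBimoduleMap (B := B) wedge)
    (hwedge_surj : Function.Surjective wedge)
    (d₁ : Ω →ₗ[ℂ] Ω2)
    (hd₁ : ∀ a b : B, d₁ (a • D.d b) = wedge (P.tp (D.d a) (D.d b)))
    -- the coactions making the calculus A-covariant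
    (cΩ : Coaction A Ω) (cT : Coaction A T) (cΩ2 : Coaction A Ω2)
    (hΩrel : IsRelHopfModule δB cΩ) (hTrel : IsRelHopfModule δB cT)
    (hΩ2rel : IsRelHopfModule δB cΩ2)
    (hd_cov : ∀ b : B, cΩ.ρ (D.d b) = (LinearMap.lTensor A D.d) (δB.ρ b))
    (hwedge_cov : IsCovariant cT cΩ2 wedge)
    (hd₁_cov : IsCovariant cΩ cΩ2 d₁)
    (htp_cov : ∀ (ω η : Ω) (n m : ℕ) (a : Fin n → A) (ω' : Fin n → Ω)
      (c : Fin m → A) (η' : Fin m → Ω),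
      cΩ.ρ ω = ∑ i, a i ⊗ₜ ω' i → cΩ.ρ η = ∑ j, c j ⊗ₜ η' j →
      cT.ρ (P.tp ω η) = ∑ i, ∑ j, (a i * c j) ⊗ₜ P.tp (ω' i) (η' j))
    -- Ω¹ and Ω² are objects of ^A_0Mod_B
    [Module.Finite B Ω] [Module.Finite B Ω2]
    (hΩplus : Submodule.span ℂ {x : Ω | ∃ (b : B) (m : Ω),
        Coalgebra.counit (R := ℂ) (ι b) = 0 ∧ x = op b • m} =
      Submodule.span ℂ {x : Ω | ∃ (b : B) (m : Ω),
        Coalgebra.counit (R := ℂ) (ι b) = 0 ∧ x = b • m})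
    (hΩ2plus : Submodule.span ℂ {x : Ω2 | ∃ (b : B) (m : Ω2),
        Coalgebra.counit (R := ℂ) (ι b) = 0 ∧ x = op b • m} =
      Submodule.span ℂ {x : Ω2 | ∃ (b : B) (m : Ω2),
        Coalgebra.counit (R := ℂ) (ι b) = 0 ∧ x = b • m}) :
    -- conclusion: the calculus is covariantly quasi-tame
    ∃ s : Ω2 →ₗ[ℂ] T, IsBimoduleMap (B := B) s ∧ IsCovariant cΩ2 cT s ∧
      ∀ x : Ω2, wedge (s x) = x := by
  obtain ⟨E, hE1, hEl, hEr, hEc⟩ :=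
    exists_coinvariant_expectation π ι hι hcoinv hcosemi δB hδB_comul
  have := D.isScalarTower
  have := D.isScalarTower_op
  have := P.smulCommClass
  have := P.isScalarTower
  have := P.isScalarTower_op
  have := hwedge.isScalarTower hwedge_surj
  have := hwedge.isScalarTower_op hwedge_surj
  have hΩ : ∀ (b : B) (m : Ω), Coalgebra.counit (R := ℂ) (ι b) = 0 →
      op b • m ∈ plusSubmodule ι Ω :=
    fun b m hb => hΩplus.le (Submodule.subset_span ⟨b, m, hb, rfl⟩)
  have hΩ2 : ∀ (b : B) (m : Ω2), Coalgebra.counit (R := ℂ) (ι b) = 0 →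
      op b • m ∈ plusSubmodule ι Ω2 :=
    fun b m hb => hΩ2plus.le (Submodule.subset_span ⟨b, m, hb, rfl⟩)
  exact exists_relHopf_section hδB_comul hE1 hEl hEr hEc hTrel hΩ2rel
    (P.op_smul_mem_plusSubmodule hΩ hΩ) hΩ2 hwedge hwedge_cov hwedge_surj

end
end
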